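/- arXiv:1909.08345 — 5 statements merged into one kernel-verified Lean document; each statement's English description precedes it below -/
import Mathlib

section
/- Let E and A be n×n real matrices. The pair (E, A) is regular and impulse-free if and only if the (2n)×(2n) block matrix [[E, 0], [A, E]] has rank equal to n + rank(E). -/
open Polynomial

/-- The pencil polynomial `p(X) = det(X·E − A)` of the pair `(E, A)`. -/
noncomputable def pencil {n : Type*} [Fintype n] [DecidableEq n]
    (E A : Matrix n n ℝ) : Polynomial ℝ :=
  (Matrix.of fun i j => Polynomial.X * Polynomial.C (E i j) - Polynomial.C (A i j)).det

/-- The pair `(E, A)` is regular: the pencil polynomial is not identically zero. -/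
def RegularPair {n : Type*} [Fintype n] [DecidableEq n] (E A : Matrix n n ℝ) : Prop :=
  pencil E A ≠ 0

/-- The pair `(E, A)` is impulse-free: the pencil polynomial is nonzero and its degree
equals `rank E`. -/
def ImpulseFreePair {n : Type*} [Fintype n] [DecidableEq n] (E A : Matrix n n ℝ) : Prop :=
  pencil E A ≠ 0 ∧ (pencil E A).natDegree = E.rank

theorem aux_prod {ι : Type*} (s : Finset ι) (f : ι → ℝ[X]) (d : ι → ℕ)
    (h : ∀ i ∈ s, (f i).natDegree ≤ d i) :
    (∏ i ∈ s, f i).natDegree ≤ ∑ i ∈ s, d i ∧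
      (∏ i ∈ s, f i).coeff (∑ i ∈ s, d i) = ∏ i ∈ s, (f i).coeff (d i) := by
  classical
  induction s using Finset.induction_on with
  | empty => simp
  | insert a s ha ih =>
    obtain ⟨h1, h2⟩ := ih fun i hi => h i (Finset.mem_insert_of_mem hi)
    have h0 := h a (Finset.mem_insert_self _ _)
    rw [Finset.prod_insert ha, Finset.sum_insert ha, Finset.prod_insert ha]
    refine ⟨natDegree_mul_le_of_le h0 h1, ?_⟩
    rw [coeff_mul_add_eq_of_natDegree_le h0 h1, h2]

theorem aux_det {ι : Type*} [Fintype ι] [DecidableEq ι] (M : Matrix ι ι ℝ[X]) (d : ι → ℕ)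
    (h : ∀ i j, (M i j).natDegree ≤ d j) :
    M.det.natDegree ≤ ∑ i, d i ∧
      M.det.coeff (∑ i, d i) = (Matrix.of fun i j => (M i j).coeff (d j)).det := by
  have key : ∀ g : Equiv.Perm ι, _ := fun g =>
    aux_prod Finset.univ (fun i => M (g i) i) d (fun i _ => h _ _)
  constructor
  · rw [Matrix.det_apply]
    refine natDegree_sum_le_of_forall_le _ _ fun g _ => ?_
    refine (natDegree_smul_le _ _).trans (key g).1
  · rw [Matrix.det_apply, Matrix.det_apply, finsetSum_coeff]
    refine Finset.sum_congr rfl fun g _ => ?_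
    rw [coeff_smul, (key g).2]
    rfl

theorem aux_pencil {ι κ : Type*} [Fintype ι] [DecidableEq ι] [Fintype κ] [DecidableEq κ]
    (P : Matrix ι ι ℝ) (Q : Matrix ι κ ℝ) (R : Matrix κ ι ℝ) (S : Matrix κ κ ℝ) :
    (pencil (Matrix.fromBlocks 1 0 0 0) (Matrix.fromBlocks P Q R S)).natDegree
        ≤ Fintype.card ι ∧
      (pencil (Matrix.fromBlocks 1 0 0 0) (Matrix.fromBlocks P Q R S)).coeff (Fintype.card ι)
        = (-S).det := by
  have h := aux_det (Matrix.of fun i j => Polynomial.X *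
      Polynomial.C ((Matrix.fromBlocks 1 0 0 0 : Matrix (ι ⊕ κ) (ι ⊕ κ) ℝ) i j)
      - Polynomial.C (Matrix.fromBlocks P Q R S i j)) (Sum.elim (fun _ => 1) (fun _ => 0)) (by
    rintro i (j | j)
    · simp only [Matrix.of_apply, Sum.elim_inl]
      compute_degree
    · rcases i with i | i <;> simp)
  have hs : ∑ i : ι ⊕ κ, (Sum.elim (fun _ => 1) (fun _ => 0) i : ℕ) = Fintype.card ι := by
    simp
  rw [hs] at h
  refine ⟨h.1, h.2.trans ?_⟩
  have : (Matrix.of fun i j => ((Matrix.of fun i j => Polynomial.X *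
      Polynomial.C ((Matrix.fromBlocks 1 0 0 0 : Matrix (ι ⊕ κ) (ι ⊕ κ) ℝ) i j)
      - Polynomial.C (Matrix.fromBlocks P Q R S i j)) i j).coeff
        (Sum.elim (fun _ => 1) (fun _ => 0) j)) = Matrix.fromBlocks 1 (-Q) 0 (-S) := by
    ext i j
    rcases i with i | i <;> rcases j with j | j <;> simp [coeff_C]
  rw [this, Matrix.det_fromBlocks_zero₂₁, Matrix.det_one, one_mul]

theorem aux_impulse (p : ℝ[X]) (r : ℕ) (h : p.natDegree ≤ r) :
    (p ≠ 0 ∧ p ≠ 0 ∧ p.natDegree = r) ↔ p.coeff r ≠ 0 := by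
  constructor
  · rintro ⟨h0, -, rfl⟩
    simpa using h0
  · intro hc
    have h0 : p ≠ 0 := by rintro rfl; simp at hc
    exact ⟨h0, h0, le_antisymm h (le_natDegree_of_ne_zero hc)⟩

theorem aux_rank {ι κ : Type*} [Fintype ι] [DecidableEq ι] [Fintype κ] [DecidableEq κ]
    (P : Matrix ι ι ℝ) (Q : Matrix ι κ ℝ) (R : Matrix κ ι ℝ) (S : Matrix κ κ ℝ) :
    (Matrix.fromBlocks (Matrix.fromBlocks 1 0 0 0) 0 (Matrix.fromBlocks P Q R S)
      (Matrix.fromBlocks 1 0 0 0) : Matrix ((ι ⊕ κ) ⊕ (ι ⊕ κ)) ((ι ⊕ κ) ⊕ (ι ⊕ κ)) ℝ).rank = (Fintype.card ι + Fintype.card κ) + Fintype.card ι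
      ↔ S.det ≠ 0 := by
  set M := (Matrix.fromBlocks (Matrix.fromBlocks 1 0 0 0) 0 (Matrix.fromBlocks P Q R S)
      (Matrix.fromBlocks 1 0 0 0) : Matrix ((ι ⊕ κ) ⊕ (ι ⊕ κ)) ((ι ⊕ κ) ⊕ (ι ⊕ κ)) ℝ) with hM
  have hmem : ∀ v, v ∈ LinearMap.ker M.mulVecLin ↔ (∀ i, v (.inl (.inl i)) = 0) ∧
      (S.mulVec (fun k => v (.inl (.inr k))) = 0) ∧
      (∀ i, v (.inr (.inl i)) = - Q.mulVec (fun k => v (.inl (.inr k))) i) := by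
    intro v
    rw [LinearMap.mem_ker, Matrix.mulVecLin_apply]
    have e1 : ∀ i, (M.mulVec v) (.inl (.inl i)) = v (.inl (.inl i)) := by
      intro i
      simp [hM, Matrix.mulVec, dotProduct, Matrix.one_apply]
    have e2 : ∀ i, (M.mulVec v) (.inl (.inr i)) = 0 := by
      intro i
      simp [hM, Matrix.mulVec, dotProduct]
    have e3 : ∀ i, (M.mulVec v) (.inr (.inl i)) = P.mulVec (fun k => v (.inl (.inl k))) i +
        Q.mulVec (fun k => v (.inl (.inr k))) i + v (.inr (.inl i)) := by
      intro i
      simp [hM, Matrix.mulVec, dotProduct, Matrix.one_apply]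
    have e4 : ∀ i, (M.mulVec v) (.inr (.inr i)) = R.mulVec (fun k => v (.inl (.inl k))) i +
        S.mulVec (fun k => v (.inl (.inr k))) i := by
      intro i
      simp [hM, Matrix.mulVec, dotProduct]
    constructor
    · intro h
      have a1 : ∀ i, v (.inl (.inl i)) = 0 := fun i => by rw [← e1, h]; rfl
      have a0 : (fun k => v (.inl (.inl k))) = 0 := funext a1
      refine ⟨a1, ?_, ?_⟩
      · funext i
        have := e4 i
        rw [h, a0] at this
        simpa using this.symm
      · intro i
        have := e3 i
        rw [h, a0] at this
        simp at this
        linarith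
    · rintro ⟨a1, a2, a3⟩
      have a0 : (fun k => v (.inl (.inl k))) = 0 := funext a1
      funext i
      rcases i with (i | i) | (i | i)
      · rw [e1, a1]; rfl
      · rw [e2]; rfl
      · rw [e3, a0, a3]; simp
      · rw [e4, a0, a2]; simp
  let f : LinearMap.ker M.mulVecLin ≃ₗ[ℝ] LinearMap.ker S.mulVecLin × (κ → ℝ) :=
    { toFun := fun v => (⟨fun k => v.1 (.inl (.inr k)), ((hmem _).1 v.2).2.1⟩,
        fun k => v.1 (.inr (.inr k)))
      map_add' := fun _ _ => rfl
      map_smul' := fun _ _ => rfl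
      invFun := fun w => ⟨Sum.elim (Sum.elim 0 w.1.1) (Sum.elim (- Q.mulVec w.1.1) w.2), by
        rw [hmem]
        exact ⟨fun _ => rfl, w.1.2, fun _ => rfl⟩⟩
      left_inv := by
        intro v
        obtain ⟨b1, b2, b3⟩ := (hmem _).1 v.2
        ext i
        rcases i with (i | i) | (i | i)
        · exact (b1 i).symm
        · rfl
        · exact (b3 i).symm
        · rfl
      right_inv := fun _ => rfl }
  have hf := f.finrank_eq
  rw [Module.finrank_prod, Module.finrank_fintype_fun_eq_card] at hf
  have hr := LinearMap.finrank_range_add_finrank_ker M.mulVecLin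
  rw [Module.finrank_fintype_fun_eq_card] at hr
  simp only [Fintype.card_sum] at hr
  have hr' : M.rank + Module.finrank ℝ (LinearMap.ker M.mulVecLin) = _ := hr
  have hS : S.det ≠ 0 ↔ Module.finrank ℝ (LinearMap.ker S.mulVecLin) = 0 := by
    rw [Submodule.finrank_eq_zero, Matrix.ker_mulVecLin_eq_bot_iff, ne_eq,
      ← Matrix.exists_mulVec_eq_zero_iff]
    push Not
    exact ⟨fun h v hv => by_contra fun h0 => h v h0 hv, fun h v h0 hv => h0 (h v hv)⟩
  rw [hS]
  omega

theorem aux_pencil_eq {ι : Type*} [Fintype ι] [DecidableEq ι] (E A : Matrix ι ι ℝ) :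
    pencil E A = ((X : ℝ[X]) • E.map C - A.map C).det := rfl

theorem aux_pencil_mul {ι : Type*} [Fintype ι] [DecidableEq ι] (E A V U : Matrix ι ι ℝ) :
    pencil (V * E * U) (V * A * U) = C V.det * pencil E A * C U.det := by
  rw [aux_pencil_eq, aux_pencil_eq, RingHom.map_det, RingHom.map_det, ← Matrix.det_mul,
    ← Matrix.det_mul]
  congr 1
  simp only [Matrix.map_mul, RingHom.mapMatrix_apply]
  rw [Matrix.mul_sub, Matrix.sub_mul, Matrix.mul_smul, Matrix.smul_mul]

/-- The pair `(E, A)` is regular and impulse-free iff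
`rank [[E, 0], [A, E]] = n + rank E`. -/
theorem stmt0 (n : ℕ) (E A : Matrix (Fin n) (Fin n) ℝ) :
    (RegularPair E A ∧ ImpulseFreePair E A) ↔
      (Matrix.fromBlocks E 0 A E).rank = n + E.rank := by
  obtain ⟨V, U, e, hV, hU, h⟩ := Matrix.exists_rank_normal_form E
  have hV' := (Matrix.isUnit_iff_isUnit_det _).1 hV
  have hU' := (Matrix.isUnit_iff_isUnit_det _).1 hU
  set B := (V * A * U).submatrix e.symm e.symm with hB
  have hA : V * A * U = B.submatrix e e := by simp [hB]
  -- rank side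
  have hrank : (Matrix.fromBlocks E 0 A E).rank =
      (Matrix.fromBlocks (Matrix.fromBlocks 1 0 0 0 : Matrix (Fin E.rank ⊕ Fin (Fintype.card (Fin n) - E.rank))
        (Fin E.rank ⊕ Fin (Fintype.card (Fin n) - E.rank)) ℝ) 0 B (Matrix.fromBlocks 1 0 0 0 : Matrix (Fin E.rank ⊕ Fin (Fintype.card (Fin n) - E.rank))
        (Fin E.rank ⊕ Fin (Fintype.card (Fin n) - E.rank)) ℝ)).rank := by
    have d1 : IsUnit (Matrix.fromBlocks V 0 0 V).det := by
      rw [Matrix.det_fromBlocks_zero₂₁]; exact hV'.mul hV'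
    have d2 : IsUnit (Matrix.fromBlocks U 0 0 U).det := by
      rw [Matrix.det_fromBlocks_zero₂₁]; exact hU'.mul hU'
    rw [← Matrix.rank_mul_eq_right_of_isUnit_det _ (Matrix.fromBlocks E 0 A E) d1,
      ← Matrix.rank_mul_eq_left_of_isUnit_det _ (_ * Matrix.fromBlocks E 0 A E) d2,
      Matrix.fromBlocks_multiply, Matrix.fromBlocks_multiply]
    simp only [Matrix.mul_zero, Matrix.zero_mul, add_zero, zero_add]
    rw [h, hA, ← Matrix.rank_submatrix (Matrix.fromBlocks (Matrix.fromBlocks 1 0 0 0 : Matrix (Fin E.rank ⊕ Fin (Fintype.card (Fin n) - E.rank))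
        (Fin E.rank ⊕ Fin (Fintype.card (Fin n) - E.rank)) ℝ) 0 B
      (Matrix.fromBlocks 1 0 0 0 : Matrix (Fin E.rank ⊕ Fin (Fintype.card (Fin n) - E.rank))
        (Fin E.rank ⊕ Fin (Fintype.card (Fin n) - E.rank)) ℝ)) (e.sumCongr e) (e.sumCongr e)]
    congr 1
    ext i j
    rcases i with i | i <;> rcases j with j | j <;> rfl
  have hp : C V.det * pencil E A * C U.det = pencil (Matrix.fromBlocks 1 0 0 0 : Matrix (Fin E.rank ⊕ Fin (Fintype.card (Fin n) - E.rank))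
        (Fin E.rank ⊕ Fin (Fintype.card (Fin n) - E.rank)) ℝ) B := by
    rw [← aux_pencil_mul, h, hA]
    exact Matrix.det_submatrix_equiv_self e (Matrix.of fun i j => Polynomial.X * Polynomial.C
      ((Matrix.fromBlocks 1 0 0 0 : Matrix (_ ⊕ _) (_ ⊕ _) ℝ) i j) - Polynomial.C (B i j))
  have hBb := (Matrix.fromBlocks_toBlocks B).symm
  have hpen := aux_pencil B.toBlocks₁₁ B.toBlocks₁₂ B.toBlocks₂₁ B.toBlocks₂₂
  have hrk := aux_rank B.toBlocks₁₁ B.toBlocks₁₂ B.toBlocks₂₁ B.toBlocks₂₂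
  rw [← hBb] at hpen hrk
  simp only [Fintype.card_fin] at hpen hrk
  have hle : E.rank ≤ n := by simpa using E.rank_le_card_width
  rw [Nat.add_sub_cancel' hle] at hrk
  rw [hrank, hrk]
  rw [← hp, natDegree_mul_C hU'.ne_zero, natDegree_C_mul hV'.ne_zero, coeff_mul_C,
    coeff_C_mul, Matrix.det_neg] at hpen
  refine (aux_impulse _ _ hpen.1).trans (not_congr ?_)
  have hh := hpen.2
  have hv := hV'.ne_zero
  have hu := hU'.ne_zero
  constructor
  · intro h0
    rw [h0] at hh
    simpa using hh.symm
  · intro h0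
    rw [h0] at hh
    simpa [hv, hu] using hh
end

section
/- Let E and A be n×n real matrices. The pair (E, A) is regular, impulse-free and asymptotically stable if and only if there exists an n×n real matrix R such that EᵀR = RᵀE, the symmetric matrix EᵀR is positive semidefinite, and AᵀR + RᵀA is negative definite. -/
open Polynomial Matrix

/-- The pair `(E, A)` is asymptotically stable: every complex `λ` with
`det(λ·E − A) = 0` has negative real part. -/
def AsympStablePair {n : Type*} [Fintype n] [DecidableEq n] (E A : Matrix n n ℝ) : Prop :=
  ∀ lam : ℂ, (lam • E.map (Complex.ofReal) - A.map (Complex.ofReal)).det = 0 → lam.re < 0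

def LMI {m : Type*} [Fintype m] [DecidableEq m] (E A : Matrix m m ℝ) : Prop :=
  ∃ R : Matrix m m ℝ,
        Eᵀ * R = Rᵀ * E ∧ (Eᵀ * R).PosSemidef ∧ (-(Aᵀ * R + Rᵀ * A)).PosDef

def Good {m : Type*} [Fintype m] [DecidableEq m] (E A : Matrix m m ℝ) : Prop :=
  RegularPair E A ∧ ImpulseFreePair E A ∧ AsympStablePair E A

section aux
variable {m m' : Type*} [Fintype m] [DecidableEq m] [Fintype m'] [DecidableEq m']

lemma LMI.equiv {E A : Matrix m m ℝ} (h : LMI E A) {P Q : Matrix m m ℝ} (hP : IsUnit P)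
    (hQ : IsUnit Q) : LMI (P * E * Q) (P * A * Q) := by
  obtain ⟨R, h1, h2, h3⟩ := h
  have hPd : IsUnit P.det := (isUnit_iff_isUnit_det _).1 hP
  have hc : Pᵀ * (P⁻¹)ᵀ = 1 := by
    rw [← transpose_mul, nonsing_inv_mul _ hPd, transpose_one]
  have hc' : P⁻¹ * P = 1 := nonsing_inv_mul _ hPd
  have key : ∀ M : Matrix m m ℝ, (P * M * Q)ᵀ * ((P⁻¹)ᵀ * R * Q) = Qᵀ * (Mᵀ * R) * Q := by
    intro M
    calc _ = Qᵀ * Mᵀ * (Pᵀ * (P⁻¹)ᵀ) * R * Q := by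
          simp only [transpose_mul, Matrix.mul_assoc]
      _ = _ := by rw [hc]; simp only [Matrix.mul_assoc, Matrix.one_mul]
  have key' : ∀ M : Matrix m m ℝ, ((P⁻¹)ᵀ * R * Q)ᵀ * (P * M * Q) = Qᵀ * (Rᵀ * M) * Q := by
    intro M
    have := congrArg transpose (key M)
    simpa [transpose_mul, Matrix.mul_assoc] using this
  refine ⟨(P⁻¹)ᵀ * R * Q, ?_, ?_, ?_⟩
  · rw [key, key', h1]
  · rw [key]
    simpa using h2.conjTranspose_mul_mul_same Q
  · rw [key, key']
    have := h3.conjTranspose_mul_mul_same (B := Q) (mulVec_injective_of_isUnit hQ)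
    rw [conjTranspose_eq_transpose_of_trivial] at this
    convert this using 1
    simp only [Matrix.mul_neg, Matrix.neg_mul, Matrix.mul_add, Matrix.add_mul]

lemma LMI.reindex {E A : Matrix m m ℝ} (h : LMI E A) (e : m' ≃ m) :
    LMI (E.submatrix e e) (A.submatrix e e) := by
  obtain ⟨R, h1, h2, h3⟩ := h
  refine ⟨R.submatrix e e, ?_, ?_, ?_⟩
  · simp only [transpose_submatrix, submatrix_mul_equiv, h1]
  · simp only [transpose_submatrix, submatrix_mul_equiv]
    exact h2.submatrix e
  · simp only [transpose_submatrix, submatrix_mul_equiv]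
    exact h3.submatrix e.injective

lemma pencil_eq (E A : Matrix m m ℝ) :
    pencil E A = ((X : ℝ[X]) • E.map C - A.map C).det := by
  unfold pencil; congr 1

lemma pencil_equiv (E A P Q : Matrix m m ℝ) :
    pencil (P * E * Q) (P * A * Q) = C (P.det * Q.det) * pencil E A := by
  rw [pencil_eq, pencil_eq]
  have : (X : ℝ[X]) • (P * E * Q).map C - (P * A * Q).map C
      = P.map C * ((X : ℝ[X]) • E.map C - A.map C) * Q.map C := by
    simp only [Matrix.map_mul, Matrix.mul_sub, Matrix.sub_mul, Matrix.mul_smul, Matrix.smul_mul]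
  rw [this, det_mul, det_mul]
  have hd : ∀ M : Matrix m m ℝ, (M.map C).det = C M.det := fun M => (RingHom.map_det C M).symm
  rw [hd, hd, C_mul]; ring

lemma Good.equiv {E A : Matrix m m ℝ} (h : Good E A) {P Q : Matrix m m ℝ} (hP : IsUnit P)
    (hQ : IsUnit Q) : Good (P * E * Q) (P * A * Q) := by
  have hPd : IsUnit P.det := (isUnit_iff_isUnit_det _).1 hP
  have hQd : IsUnit Q.det := (isUnit_iff_isUnit_det _).1 hQ
  have hne : P.det * Q.det ≠ 0 := mul_ne_zero hPd.ne_zero hQd.ne_zero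
  obtain ⟨h1, ⟨h2, h3⟩, h4⟩ := h
  have h0 : pencil (P * E * Q) (P * A * Q) ≠ 0 := by
    rw [pencil_equiv]; exact mul_ne_zero (by simpa using hne) h2
  refine ⟨h0, ⟨h0, ?_⟩, ?_⟩
  · rw [pencil_equiv, natDegree_C_mul hne, rank_mul_eq_left_of_isUnit_det _ _ hQd,
      rank_mul_eq_right_of_isUnit_det _ _ hPd, h3]
  · intro l hl
    apply h4
    have hm : ∀ M N : Matrix m m ℝ, (M * N).map Complex.ofReal
        = M.map Complex.ofReal * N.map Complex.ofReal := fun M N =>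
      Matrix.map_mul (f := Complex.ofRealHom)
    have hd : ∀ M : Matrix m m ℝ, (M.map Complex.ofReal).det = (M.det : ℂ) := fun M =>
      (RingHom.map_det Complex.ofRealHom M).symm
    have : l • (P * E * Q).map Complex.ofReal - (P * A * Q).map Complex.ofReal
      = P.map Complex.ofReal * (l • E.map Complex.ofReal - A.map Complex.ofReal)
        * Q.map Complex.ofReal := by
      simp only [hm, Matrix.mul_sub, Matrix.sub_mul, Matrix.mul_smul, Matrix.smul_mul]
    rw [this, det_mul, det_mul, hd, hd] at hl
    have hP0 : (P.det : ℂ) ≠ 0 := by exact_mod_cast hPd.ne_zero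
    have hQ0 : (Q.det : ℂ) ≠ 0 := by exact_mod_cast hQd.ne_zero
    simpa [hP0, hQ0] using hl

lemma Good.reindex {E A : Matrix m m ℝ} (h : Good E A) (e : m' ≃ m) :
    Good (E.submatrix e e) (A.submatrix e e) := by
  obtain ⟨h1, ⟨h2, h3⟩, h4⟩ := h
  have hp : pencil (E.submatrix e e) (A.submatrix e e) = pencil E A := by
    unfold pencil
    rw [← det_submatrix_equiv_self e]; rfl
  refine ⟨by unfold RegularPair; rwa [hp], ⟨by rwa [hp], by rw [hp, rank_submatrix, h3]⟩, ?_⟩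
  intro l hl
  apply h4
  rw [← det_submatrix_equiv_self e]
  exact hl

lemma LMI.stable {E A : Matrix m m ℝ} (h : LMI E A) : AsympStablePair E A := by
  obtain ⟨R, h1, h2, h3⟩ := h
  intro l hl
  obtain ⟨v, hv0, hv⟩ := exists_mulVec_eq_zero_iff.2 hl
  set x : m → ℝ := fun i => (v i).re with hx
  set y : m → ℝ := fun i => (v i).im with hy
  have hvi : ∀ i, (∑ j, (l * (E i j : ℂ) * v j)) = ∑ j, (A i j : ℂ) * v j := by
    intro i
    have := congrFun hv i
    simpa [mulVec, dotProduct, sub_mul, sub_eq_zero] using this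
  have hAx : A *ᵥ x = E *ᵥ (l.re • x - l.im • y) := by
    ext i
    have := congrArg Complex.re (hvi i)
    simp only [Complex.re_sum] at this
    simp only [mulVec, dotProduct, hx, hy, Pi.sub_apply, Pi.smul_apply, smul_eq_mul]
    simp at this
    rw [← this, ← Finset.sum_sub_distrib]
    exact Finset.sum_congr rfl fun j _ => by ring
  have hAy : A *ᵥ y = E *ᵥ (l.im • x + l.re • y) := by
    ext i
    have := congrArg Complex.im (hvi i)
    simp only [Complex.im_sum] at this
    simp only [mulVec, dotProduct, hx, hy, Pi.add_apply, Pi.smul_apply, smul_eq_mul]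
    simp at this
    rw [← this]
    exact Finset.sum_congr rfl fun j _ => by ring
  have q : ∀ z w : m → ℝ, A *ᵥ z = E *ᵥ w →
      z ⬝ᵥ (-(Aᵀ * R + Rᵀ * A)) *ᵥ z = -2 * (w ⬝ᵥ (Eᵀ * R) *ᵥ z) := by
    intro z w hzw
    have e1 : z ⬝ᵥ (Aᵀ * R) *ᵥ z = w ⬝ᵥ (Eᵀ * R) *ᵥ z := by
      rw [← mulVec_mulVec, ← mulVec_mulVec, dotProduct_mulVec, dotProduct_mulVec w,
        vecMul_transpose, vecMul_transpose, hzw]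
    have e2 : z ⬝ᵥ (Rᵀ * A) *ᵥ z = w ⬝ᵥ (Eᵀ * R) *ᵥ z := by
      rw [← e1, dotProduct_mulVec, ← mulVec_transpose, dotProduct_comm]
      simp
    rw [neg_mulVec, dotProduct_neg, add_mulVec, dotProduct_add, e1, e2]; ring
  have hG : (Eᵀ * R)ᵀ = Eᵀ * R := by rw [transpose_mul, transpose_transpose, ← h1]
  have hs : y ⬝ᵥ (Eᵀ * R) *ᵥ x = x ⬝ᵥ (Eᵀ * R) *ᵥ y := by
    rw [dotProduct_mulVec, ← mulVec_transpose, hG, dotProduct_comm]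
  have p3 : ∀ z : m → ℝ, z ≠ 0 → 0 < z ⬝ᵥ (-(Aᵀ * R + Rᵀ * A)) *ᵥ z := fun z hz => by
    simpa using h3.dotProduct_mulVec_pos hz
  have p3' : ∀ z : m → ℝ, 0 ≤ z ⬝ᵥ (-(Aᵀ * R + Rᵀ * A)) *ᵥ z := fun z => by
    simpa using h3.posSemidef.dotProduct_mulVec_nonneg z
  have p2 : ∀ z : m → ℝ, 0 ≤ z ⬝ᵥ (Eᵀ * R) *ᵥ z := fun z => by
    simpa using h2.dotProduct_mulVec_nonneg z
  have hpos : 0 < x ⬝ᵥ (-(Aᵀ * R + Rᵀ * A)) *ᵥ x + y ⬝ᵥ (-(Aᵀ * R + Rᵀ * A)) *ᵥ y := by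
    by_cases hx0 : x = 0
    · have : y ≠ 0 := by
        intro hy0
        apply hv0
        ext i
        exact Complex.ext (congrFun hx0 i) (congrFun hy0 i)
      linarith [p3 y this, p3' x]
    · linarith [p3 x hx0, p3' y]
  rw [q x _ hAx, q y _ hAy] at hpos
  simp only [sub_dotProduct, add_dotProduct, smul_dotProduct, smul_eq_mul, hs] at hpos
  have := p2 x
  have := p2 y
  by_contra hc
  push Not at hc
  nlinarith [mul_nonneg hc (p2 x), mul_nonneg hc (p2 y)]

lemma AsympStablePair.regular {E A : Matrix m m ℝ} (h : AsympStablePair E A) :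
    pencil E A ≠ 0 := by
  intro h0
  have hd : (-A).det = 0 := by
    have := congrArg (eval 0) h0
    rw [pencil_eq, ← coe_evalRingHom, RingHom.map_det, coe_evalRingHom, eval_zero] at this
    rw [← this]; congr 1; ext i j; simp
  have := h 0 (by
    have h2 := congrArg Complex.ofRealHom hd
    rw [RingHom.map_det, map_zero] at h2
    rw [zero_smul, zero_sub, ← h2]; congr 1; ext i j; simp)
  simp at this

end aux
section lyap
variable {m : Type*} [Fintype m] [DecidableEq m]
open scoped Matrix.Norms.L2Operator
open Filter Topology

lemma exists_pow_norm_lt (M : Matrix m m ℂ) (h : ∀ z ∈ spectrum ℂ M, ‖z‖ < 1) :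
    ∃ k : ℕ, 0 < k ∧ ‖M ^ k‖ < 1 := by
  cases isEmpty_or_nonempty m
  · refine ⟨1, one_pos, ?_⟩
    have : M ^ 1 = 0 := Subsingleton.elim _ _
    rw [this]; simp
  · have hr : spectralRadius ℂ M < (1 : NNReal) :=
      spectrum.spectralRadius_lt_of_forall_lt M (r := 1) (fun z hz => by
        exact_mod_cast h z hz)
    have ht := spectrum.pow_nnnorm_pow_one_div_tendsto_nhds_spectralRadius M
    have := (ht.eventually (gt_mem_nhds hr)).and (eventually_gt_atTop 0)
    obtain ⟨k, hk, hk0⟩ := this.exists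
    refine ⟨k, hk0, ?_⟩
    by_contra hc
    push Not at hc
    have h1 : (1 : ENNReal) ≤ (‖M ^ k‖₊ : ENNReal) := by
      exact_mod_cast hc
    have := ENNReal.one_le_rpow h1 (z := 1 / (k : ℝ)) (by positivity)
    simp only [ENNReal.coe_one] at hk
    exact absurd hk (not_lt.2 this)

lemma exists_pow_norm_lt_real (B : Matrix m m ℝ)
    (h : ∀ z ∈ spectrum ℂ (B.map Complex.ofReal), ‖z‖ < 1) :
    ∃ k : ℕ, 0 < k ∧ ‖B ^ k‖ < 1 := by
  obtain ⟨k, hk, hlt⟩ := exists_pow_norm_lt _ h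
  have ht := tendsto_pow_atTop_nhds_zero_of_norm_lt_one hlt
  have hre : Continuous (fun M : Matrix m m ℂ => M.map Complex.re) :=
    continuous_id.matrix_map Complex.continuous_re
  have h2 := ((continuous_norm.comp hre).tendsto 0).comp ht
  have h3 : ∀ j : ℕ, ((B.map Complex.ofReal ^ k) ^ j).map Complex.re = B ^ (k * j) := by
    intro j
    rw [← pow_mul]
    have : (B.map Complex.ofReal) ^ (k * j) = (B ^ (k * j)).map Complex.ofReal :=
      (map_pow (Complex.ofRealHom.mapMatrix) B (k * j)).symm
    rw [this]; ext i l; simp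
  have h4 : Tendsto (fun j : ℕ => ‖B ^ (k * j)‖) atTop (𝓝 0) := by
    convert h2 using 1
    · ext j; simp only [Function.comp, h3]
    · simp [Function.comp]
  obtain ⟨j, hj, hj0⟩ := ((h4.eventually (gt_mem_nhds one_pos)).and (eventually_gt_atTop 0)).exists
  exact ⟨k * j, Nat.mul_pos hk hj0, hj⟩

lemma posDef_one_sub (M : Matrix m m ℝ) (h : ‖M‖ < 1) : (1 - Mᵀ * M).PosDef := by
  refine Matrix.PosDef.of_dotProduct_mulVec_pos ?_ ?_
  · rw [Matrix.IsHermitian]; simp [transpose_mul]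
  · intro x hx
    have h1 := l2_opNorm_mulVec M (WithLp.toLp 2 x)
    have hx0 : 0 < ‖(WithLp.toLp 2 x : EuclideanSpace ℝ m)‖ := by
      rw [norm_pos_iff]; simpa using hx
    have h2 : ‖(WithLp.toLp 2 (M *ᵥ x) : EuclideanSpace ℝ m)‖
        < ‖(WithLp.toLp 2 x : EuclideanSpace ℝ m)‖ := by
      refine lt_of_le_of_lt h1 ?_
      nlinarith
    have h3 := pow_lt_pow_left₀ h2 (norm_nonneg _) (two_ne_zero)
    rw [EuclideanSpace.real_norm_sq_eq, EuclideanSpace.real_norm_sq_eq] at h3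
    have h4 : star x ⬝ᵥ ((1 - Mᵀ * M) *ᵥ x) = x ⬝ᵥ x - (M *ᵥ x) ⬝ᵥ (M *ᵥ x) := by
      rw [sub_mulVec, dotProduct_sub, one_mulVec, ← mulVec_mulVec, dotProduct_mulVec _ Mᵀ,
        vecMul_transpose]; simp
    rw [h4]
    simp only [dotProduct, ← pow_two]
    simp at h3
    linarith

lemma stein (B : Matrix m m ℝ) (h : ∀ z ∈ spectrum ℂ (B.map Complex.ofReal), ‖z‖ < 1) :
    ∃ P : Matrix m m ℝ, P.PosDef ∧ (P - Bᵀ * P * B).PosDef := by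
  obtain ⟨k, hk, hB⟩ := exists_pow_norm_lt_real B h
  have tel : ∀ k : ℕ, (∑ j ∈ Finset.range k, (B ^ j)ᵀ * B ^ j)
      - Bᵀ * (∑ j ∈ Finset.range k, (B ^ j)ᵀ * B ^ j) * B = 1 - (B ^ k)ᵀ * B ^ k := by
    intro k
    induction k with
    | zero => simp
    | succ k ih =>
      have e : Bᵀ * ((B ^ k)ᵀ * B ^ k) * B = (B ^ (k+1))ᵀ * B ^ (k+1) := by
        rw [pow_succ, transpose_mul]; simp only [Matrix.mul_assoc]
      rw [Finset.sum_range_succ, Matrix.mul_add, Matrix.add_mul, e, add_sub_add_comm, ih]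
      abel
  refine ⟨∑ j ∈ Finset.range k, (B ^ j)ᵀ * B ^ j, ?_, ?_⟩
  · obtain ⟨l, rfl⟩ : ∃ l, k = l + 1 := ⟨k - 1, by omega⟩
    rw [Finset.sum_range_succ']
    refine Matrix.PosDef.posSemidef_add ?_ ?_
    · refine posSemidef_sum _ fun i _ => ?_
      simpa using posSemidef_conjTranspose_mul_self (B ^ (i+1))
    · simpa using (Matrix.PosDef.one : (1 : Matrix m m ℝ).PosDef)
  · rw [tel]; exact posDef_one_sub _ hB

lemma lyap (S : Matrix m m ℝ)
    (h : ∀ l : ℂ, (l • (1 : Matrix m m ℂ) - S.map Complex.ofReal).det = 0 → l.re < 0) :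
    ∃ P : Matrix m m ℝ, P.PosDef ∧ (-(Sᵀ * P + P * S)).PosDef := by
  have hu : IsUnit (1 - S).det := by
    rw [isUnit_iff_ne_zero]
    intro h0
    have := h 1 (by
      have h2 := congrArg Complex.ofRealHom h0
      rw [RingHom.map_det, map_zero] at h2
      rw [← h2, map_sub, map_one, one_smul]; rfl)
    simp at this
    linarith
  set W := (1 - S)⁻¹ with hW
  have hWl : W * (1 - S) = 1 := nonsing_inv_mul _ hu
  have hWr : (1 - S) * W = 1 := mul_nonsing_inv _ hu
  set Sc := S.map Complex.ofReal with hSc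
  set Wc := W.map Complex.ofReal with hWc
  have hWrc : (1 - Sc) * Wc = 1 := by
    have := congrArg (Complex.ofRealHom.mapMatrix) hWr
    simp only [map_mul, map_sub, map_one] at this
    exact this
  obtain ⟨P, hP, hP2⟩ := stein ((1 + S) * W) (by
    intro μ hμ
    have hB : ((1 + S) * W).map Complex.ofReal = (1 + Sc) * Wc := by
      have := map_mul (Complex.ofRealHom.mapMatrix) (1 + S) W
      rw [map_add, map_one] at this
      exact this
    rw [hB, spectrum.mem_iff, isUnit_iff_isUnit_det, isUnit_iff_ne_zero, not_not] at hμ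
    have hd : ((μ + 1) • Sc - (μ - 1) • (1 : Matrix m m ℂ)).det = 0 := by
      have e : (μ • (1 : Matrix m m ℂ) - (1 + Sc) * Wc) * (1 - Sc)
          = -((μ + 1) • Sc - (μ - 1) • (1 : Matrix m m ℂ)) := by
        have hc : Wc * (1 - Sc) = 1 := mul_eq_one_comm.1 hWrc
        rw [Matrix.sub_mul, Matrix.mul_assoc, hc, Matrix.smul_mul, Matrix.one_mul, Matrix.mul_one,
          smul_sub, add_smul, sub_smul, one_smul, one_smul]
        abel
      have e2 := congrArg det e
      rw [det_mul, ← Algebra.algebraMap_eq_smul_one, hμ, zero_mul, det_neg] at e2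
      have := e2.symm
      simpa using this
    have hμ1 : μ + 1 ≠ 0 := by
      intro h0
      rw [h0, zero_smul, zero_sub, ← neg_smul, det_smul, det_one, mul_one] at hd
      have hz := eq_zero_of_pow_eq_zero hd
      have e1 : μ = -1 := by linear_combination h0
      rw [e1] at hz; norm_num at hz
    have := h ((μ - 1) / (μ + 1)) (by
      have e : ((μ - 1) / (μ + 1)) • (1 : Matrix m m ℂ) - Sc
         = (-(μ + 1)⁻¹) • ((μ + 1) • Sc - (μ - 1) • (1 : Matrix m m ℂ)) := by
        rw [smul_sub, smul_smul, smul_smul, neg_mul, inv_mul_cancel₀ hμ1, neg_smul, one_smul,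
          div_eq_inv_mul, neg_mul, neg_smul]
        abel
      rw [e, det_smul, hd, mul_zero])
    have hn : 0 < Complex.normSq (μ + 1) := Complex.normSq_pos.2 hμ1
    rw [Complex.div_re, ← add_div, div_lt_iff₀ hn, zero_mul] at this
    simp at this
    have h5 : Complex.normSq μ < 1 := by
      rw [Complex.normSq_apply]; nlinarith
    rw [Complex.normSq_eq_norm_sq] at h5
    nlinarith [norm_nonneg μ])
  refine ⟨P, hP, ?_⟩
  have h6 := hP2.conjTranspose_mul_mul_same (B := 1 - S)
    (mulVec_injective_of_isUnit ((isUnit_iff_isUnit_det _).2 hu))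
  have h7 : (1 - S)ᴴ * (P - ((1 + S) * W)ᵀ * P * ((1 + S) * W)) * (1 - S)
      = (2 : ℝ) • (-(Sᵀ * P + P * S)) := by
    have h8 : ((1 + S) * W) * (1 - S) = 1 + S := by rw [Matrix.mul_assoc, hWl, Matrix.mul_one]
    have h9 : (1 - S)ᵀ * ((1 + S) * W)ᵀ = (1 + S)ᵀ := by rw [← transpose_mul, h8]
    calc _ = (1 - S)ᵀ * P * (1 - S)
          - ((1 - S)ᵀ * ((1 + S) * W)ᵀ) * P * (((1 + S) * W) * (1 - S)) := by
          rw [conjTranspose_eq_transpose_of_trivial]; noncomm_ring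
      _ = _ := by
          rw [h8, h9, transpose_sub, transpose_add, transpose_one, two_smul]; noncomm_ring
  rw [h7] at h6
  have h10 := h6.smul (a := (1/2 : ℝ)) (by norm_num)
  simpa [smul_smul] using h10
end lyap
section blocks
variable {ι κ : Type*} [Fintype ι] [DecidableEq ι] [Fintype κ] [DecidableEq κ]
open Filter Topology

abbrev E0 (ι κ : Type*) [DecidableEq ι] : Matrix (ι ⊕ κ) (ι ⊕ κ) ℝ := fromBlocks 1 0 0 0

lemma pencil_eval {m : Type*} [Fintype m] [DecidableEq m] (E A : Matrix m m ℝ) (t : ℝ) :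
    (pencil E A).eval t = (t • E - A).det := by
  rw [pencil_eq, ← coe_evalRingHom, RingHom.map_det]
  congr 1; ext i j; simp; ring

lemma det_ne_zero_of_degree (a : Matrix ι ι ℝ) (b : Matrix ι κ ℝ) (c : Matrix κ ι ℝ)
    (d : Matrix κ κ ℝ) (h0 : pencil (E0 ι κ) (fromBlocks a b c d) ≠ 0)
    (h : (pencil (E0 ι κ) (fromBlocks a b c d)).natDegree = Fintype.card ι) : d.det ≠ 0 := by
  set p := pencil (E0 ι κ) (fromBlocks a b c d) with hp
  have h1 := Polynomial.div_tendsto_atTop_leadingCoeff_div_of_degree_eq p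
    ((X : ℝ[X]) ^ (Fintype.card ι)) (by
      rw [degree_X_pow, degree_eq_natDegree h0, h])
  set H : ℝ → ℝ := fun s => (fromBlocks (1 - s • a) (-(s • b)) (-c) (-d)).det with hH
  have hc : Continuous H := by
    apply Continuous.matrix_det
    refine Continuous.matrix_fromBlocks ?_ ?_ continuous_const continuous_const
    · exact continuous_const.sub (continuous_id.smul continuous_const)
    · exact (continuous_id.smul continuous_const).neg
  have h2 : Tendsto (fun t : ℝ => H t⁻¹) atTop (𝓝 (H 0)) :=
    (hc.tendsto 0).comp tendsto_inv_atTop_zero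
  have h3 : (fun t : ℝ => H t⁻¹) =ᶠ[atTop]
      fun t => eval t p / eval t ((X : ℝ[X]) ^ (Fintype.card ι)) := by
    filter_upwards [eventually_gt_atTop 0] with t ht
    rw [hp, pencil_eval, eval_pow, eval_X, eq_div_iff (by positivity)]
    have : t • E0 ι κ - fromBlocks a b c d
        = fromBlocks (t • 1) 0 0 1 * fromBlocks (1 - t⁻¹ • a) (-(t⁻¹ • b)) (-c) (-d) := by
      rw [fromBlocks_multiply, fromBlocks_smul, sub_eq_add_neg, fromBlocks_neg, fromBlocks_add]
      congr 1 <;> simp [smul_smul, ht.ne', sub_eq_add_neg]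
    rw [this, det_mul, det_fromBlocks_zero₂₁, det_smul, det_one, det_one]
    simp only [hH]; ring
  have h4 := tendsto_nhds_unique (h2.congr' h3) h1
  have h5 : H 0 = (-d).det := by
    simp only [hH, zero_smul, sub_zero, neg_zero]
    rw [det_fromBlocks_zero₁₂, det_one, one_mul]
  rw [h5, leadingCoeff_X_pow, div_one] at h4
  intro hd
  rw [det_neg, hd, mul_zero] at h4
  exact h0 (leadingCoeff_eq_zero.1 h4.symm)

lemma exists_diag (a : Matrix ι ι ℝ) (b : Matrix ι κ ℝ) (c : Matrix κ ι ℝ)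
    (d : Matrix κ κ ℝ) (hd : d.det ≠ 0) : ∃ (P Q : Matrix (ι ⊕ κ) (ι ⊕ κ) ℝ) (S : Matrix ι ι ℝ),
    IsUnit P ∧ IsUnit Q ∧ P * E0 ι κ * Q = E0 ι κ ∧
      P * fromBlocks a b c d * Q = fromBlocks S 0 0 1 := by
  have hu : IsUnit d.det := isUnit_iff_ne_zero.2 hd
  have h1 : d⁻¹ * d = 1 := nonsing_inv_mul _ hu
  refine ⟨fromBlocks 1 (-(b * d⁻¹)) 0 d⁻¹, fromBlocks 1 0 (-(d⁻¹ * c)) 1, a - b * d⁻¹ * c,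
    ?_, ?_, ?_, ?_⟩
  · rw [isUnit_iff_isUnit_det, det_fromBlocks_zero₂₁, det_one, one_mul, det_nonsing_inv]
    simpa using hd
  · rw [isUnit_iff_isUnit_det, det_fromBlocks_zero₁₂]; simp
  · simp [fromBlocks_multiply]
  · simp [fromBlocks_multiply, h1, Matrix.mul_assoc, sub_eq_add_neg]

lemma pencil_diag (S : Matrix ι ι ℝ) :
    pencil (E0 ι κ) (fromBlocks S 0 0 1) = C ((-1) ^ Fintype.card κ) * S.charpoly := by
  rw [pencil_eq]
  have : (X : ℝ[X]) • (E0 ι κ).map C - (fromBlocks S 0 0 (1 : Matrix κ κ ℝ)).map C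
      = fromBlocks (charmatrix S) 0 0 (-1) := by
    ext i j
    rcases i with i | i <;> rcases j with j | j <;>
      simp [charmatrix_apply, Matrix.one_apply, Matrix.diagonal_apply]
  rw [this, det_fromBlocks_zero₂₁, det_neg, det_one, Matrix.charpoly]
  simp; ring

lemma rank_E0 : (E0 ι κ).rank = Fintype.card ι := by
  classical
  have : E0 ι κ = diagonal (Sum.elim (fun _ => 1) (fun _ => 0)) := by
    rw [E0, ← diagonal_one, ← diagonal_zero, fromBlocks_diagonal]
  rw [this, rank_diagonal]
  refine Fintype.card_congr ⟨fun x => match x with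
    | ⟨Sum.inl i, _⟩ => i
    | ⟨Sum.inr i, h⟩ => absurd rfl h, fun i => ⟨Sum.inl i, by simp⟩, ?_, ?_⟩
  · rintro ⟨i | i, h⟩
    · rfl
    · exact absurd rfl h
  · intro i; rfl

lemma LMI.diag (S : Matrix ι ι ℝ) (P : Matrix ι ι ℝ) (hP : P.PosDef)
    (h : (-(Sᵀ * P + P * S)).PosDef) : LMI (E0 ι κ) (fromBlocks S 0 0 1) := by
  have hPt : Pᵀ = P := by simpa [IsHermitian] using hP.1
  refine ⟨fromBlocks P 0 0 (-1), ?_, ?_, ?_⟩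
  · simp [fromBlocks_multiply, fromBlocks_transpose, hPt]
  · have : (E0 ι κ)ᵀ * fromBlocks P 0 0 (-1) = fromBlocks P 0 0 0 := by
      simp [fromBlocks_multiply, fromBlocks_transpose]
    rw [this]
    refine Matrix.PosSemidef.of_dotProduct_mulVec_nonneg ?_ ?_
    · exact IsHermitian.fromBlocks hP.1 (by simp) (by simp)
    · intro x
      rw [← Sum.elim_comp_inl_inr x, fromBlocks_mulVec]
      simpa [dotProduct] using hP.posSemidef.dotProduct_mulVec_nonneg (x ∘ Sum.inl)
  · have : -((fromBlocks S 0 0 (1 : Matrix κ κ ℝ))ᵀ * fromBlocks P 0 0 (-1)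
        + (fromBlocks P 0 0 (-1))ᵀ * fromBlocks S 0 0 (1 : Matrix κ κ ℝ))
        = fromBlocks (-(Sᵀ * P + P * S)) 0 0 ((2 : ℝ) • 1) := by
      simp only [fromBlocks_multiply, fromBlocks_transpose, fromBlocks_add, fromBlocks_neg, hPt]
      congr 1 <;> simp [two_smul]
    rw [this]
    refine Matrix.PosDef.of_dotProduct_mulVec_pos ?_ ?_
    · exact IsHermitian.fromBlocks h.1 (by simp) (by simp [IsHermitian])
    · intro x hx
      have e : star x ⬝ᵥ (fromBlocks (-(Sᵀ * P + P * S)) 0 0 ((2 : ℝ) • (1 : Matrix κ κ ℝ)) *ᵥ x)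
        = (x ∘ Sum.inl) ⬝ᵥ ((-(Sᵀ * P + P * S)) *ᵥ (x ∘ Sum.inl))
          + 2 * ((x ∘ Sum.inr) ⬝ᵥ (x ∘ Sum.inr)) := by
        conv_lhs => rw [← Sum.elim_comp_inl_inr x, fromBlocks_mulVec]
        simp [dotProduct, Finset.mul_sum, smul_mulVec]
        exact Finset.sum_congr rfl fun _ _ => by ring
      rw [e]
      have n1 : 0 ≤ (x ∘ Sum.inl) ⬝ᵥ ((-(Sᵀ * P + P * S)) *ᵥ (x ∘ Sum.inl)) := by
        simpa using h.posSemidef.dotProduct_mulVec_nonneg (x ∘ Sum.inl)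
      have n2 : 0 ≤ (x ∘ Sum.inr) ⬝ᵥ (x ∘ Sum.inr) := by
        simpa using dotProduct_star_self_nonneg (x ∘ Sum.inr)
      by_cases hl : x ∘ Sum.inl = 0
      · have hr : x ∘ Sum.inr ≠ 0 := by
          intro hr; apply hx
          rw [← Sum.elim_comp_inl_inr x, hl, hr]; ext (i | i) <;> rfl
        have : (x ∘ Sum.inr) ⬝ᵥ (x ∘ Sum.inr) ≠ 0 := by
          rwa [Ne, dotProduct_self_eq_zero]
        have := lt_of_le_of_ne n2 this.symm
        linarith
      · have : 0 < (x ∘ Sum.inl) ⬝ᵥ ((-(Sᵀ * P + P * S)) *ᵥ (x ∘ Sum.inl)) := by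
          simpa using h.dotProduct_mulVec_pos hl
        linarith

lemma LMI.det_ne_zero {a : Matrix ι ι ℝ} {b : Matrix ι κ ℝ} {c : Matrix κ ι ℝ}
    {d : Matrix κ κ ℝ} (h : LMI (E0 ι κ) (fromBlocks a b c d)) : d.det ≠ 0 := by
  obtain ⟨R, h1, h2, h3⟩ := h
  rw [← fromBlocks_toBlocks R] at h1 h3
  set r11 := R.toBlocks₁₁
  set r12 := R.toBlocks₁₂
  set r21 := R.toBlocks₂₁
  set r22 := R.toBlocks₂₂
  have hr : r12 = 0 := by
    simp only [fromBlocks_multiply, fromBlocks_transpose, fromBlocks_inj] at h1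
    simpa using h1.2.1
  have h4 := h3.submatrix (e := Sum.inr) Sum.inr_injective
  have h5 : (-((fromBlocks a b c d)ᵀ * fromBlocks r11 r12 r21 r22
      + (fromBlocks r11 r12 r21 r22)ᵀ * fromBlocks a b c d)).submatrix Sum.inr Sum.inr
      = -(dᵀ * r22 + r22ᵀ * d) := by
    simp only [fromBlocks_multiply, fromBlocks_transpose, fromBlocks_add, fromBlocks_neg, hr]
    ext i j; simp
  rw [h5] at h4
  intro hd
  obtain ⟨v, hv0, hv⟩ := exists_mulVec_eq_zero_iff.2 hd
  have h6 := h4.dotProduct_mulVec_pos hv0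
  have e1 : v ⬝ᵥ (dᵀ * r22) *ᵥ v = 0 := by
    rw [← mulVec_mulVec, dotProduct_mulVec, vecMul_transpose, hv, zero_dotProduct]
  have e2 : v ⬝ᵥ (r22ᵀ * d) *ᵥ v = 0 := by
    rw [← mulVec_mulVec, hv]; simp
  simp [neg_mulVec, add_mulVec, e1, e2] at h6

lemma block_main (a : Matrix ι ι ℝ) (b : Matrix ι κ ℝ) (c : Matrix κ ι ℝ)
    (d : Matrix κ κ ℝ) : Good (E0 ι κ) (fromBlocks a b c d) ↔ LMI (E0 ι κ) (fromBlocks a b c d) := by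
  constructor
  · intro h
    have hd := det_ne_zero_of_degree a b c d h.1 (h.2.1.2.trans rank_E0)
    obtain ⟨P, Q, S, hP, hQ, hE, hA⟩ := exists_diag a b c d hd
    have h2 := (h.equiv hP hQ).2.2
    rw [hE, hA] at h2
    obtain ⟨Y, hY, hY2⟩ := lyap S (by
      intro l hl
      apply h2
      have : l • (E0 ι κ).map Complex.ofReal
          - (fromBlocks S 0 0 (1 : Matrix κ κ ℝ)).map Complex.ofReal
          = fromBlocks (l • (1 : Matrix ι ι ℂ) - S.map Complex.ofReal) 0 0 (-1) := by
        ext i j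
        rcases i with i | i <;> rcases j with j | j <;>
          simp [Matrix.one_apply] <;> split_ifs <;> simp
      rw [this, det_fromBlocks_zero₂₁, hl, zero_mul])
    have h3 : LMI (E0 ι κ) (fromBlocks S 0 0 1) := LMI.diag S Y hY hY2
    have hPd := (isUnit_iff_isUnit_det _).1 hP
    have hQd := (isUnit_iff_isUnit_det _).1 hQ
    have h4 := h3.equiv (isUnit_nonsing_inv_iff.2 hP) (isUnit_nonsing_inv_iff.2 hQ)
    have key : ∀ M : Matrix (ι ⊕ κ) (ι ⊕ κ) ℝ, P⁻¹ * (P * M * Q) * Q⁻¹ = M := by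
      intro M
      rw [Matrix.mul_assoc P, nonsing_inv_mul_cancel_left _ _ hPd,
        mul_nonsing_inv_cancel_right _ _ hQd]
    rw [← hA] at h4
    nth_rewrite 1 [← hE] at h4
    rwa [key, key] at h4
  · intro h
    have hs := h.stable
    have hr := hs.regular
    obtain ⟨P, Q, S, hP, hQ, hE, hA⟩ := exists_diag a b c d h.det_ne_zero
    refine ⟨hr, ⟨hr, ?_⟩, hs⟩
    have hPd := (isUnit_iff_isUnit_det _).1 hP
    have hQd := (isUnit_iff_isUnit_det _).1 hQ
    have h1 := pencil_equiv (E0 ι κ) (fromBlocks a b c d) P Q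
    rw [hE, hA, pencil_diag] at h1
    have h2 := congrArg natDegree h1
    rw [natDegree_C_mul (by simp), natDegree_C_mul (mul_ne_zero hPd.ne_zero hQd.ne_zero),
      charpoly_natDegree_eq_dim] at h2
    rw [← h2, rank_E0]

end blocks

theorem stmt1 (n : ℕ) (E A : Matrix (Fin n) (Fin n) ℝ) :
    (RegularPair E A ∧ ImpulseFreePair E A ∧ AsympStablePair E A) ↔
      ∃ R : Matrix (Fin n) (Fin n) ℝ,
        Eᵀ * R = Rᵀ * E ∧ (Eᵀ * R).PosSemidef ∧ (-(Aᵀ * R + Rᵀ * A)).PosDef := by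
  change Good E A ↔ LMI E A
  obtain ⟨V, U, e, hV, hU, hE⟩ := exists_rank_normal_form E
  have hVd := (isUnit_iff_isUnit_det _).1 hV
  have hUd := (isUnit_iff_isUnit_det _).1 hU
  have key : ∀ M : Matrix (Fin n) (Fin n) ℝ, V⁻¹ * (V * M * U) * U⁻¹ = M := by
    intro M
    rw [Matrix.mul_assoc V, nonsing_inv_mul_cancel_left _ _ hVd,
      mul_nonsing_inv_cancel_right _ _ hUd]
  have hE' : (V * E * U).submatrix e.symm e.symm = E0 _ _ := by rw [hE]; simp
  set A' := (V * A * U).submatrix e.symm e.symm with hA'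
  have hA : A'.submatrix e e = V * A * U := by simp [hA']
  have hb : Good (E0 _ _) A' ↔ LMI (E0 _ _) A' := by
    rw [← fromBlocks_toBlocks A']; exact block_main _ _ _ _
  constructor
  · intro h
    have h1 := (h.equiv hV hU).reindex e.symm
    rw [hE'] at h1
    have h2 := (hb.1 h1).reindex e
    rw [← hE, hA] at h2
    have h3 := h2.equiv (isUnit_nonsing_inv_iff.2 hV) (isUnit_nonsing_inv_iff.2 hU)
    rwa [key, key] at h3
  · intro h
    have h1 := (h.equiv hV hU).reindex e.symm
    rw [hE'] at h1
    have h2 := (hb.2 h1).reindex e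
    rw [← hE, hA] at h2
    have h3 := h2.equiv (isUnit_nonsing_inv_iff.2 hV) (isUnit_nonsing_inv_iff.2 hU)
    rwa [key, key] at h3
end

section
/- For any n×n real matrices E and A, the pencil polynomial p(X) = det(X·E − A) has degree at most rank(E) (in particular, its natDegree is at most rank(E)). -/
open Polynomial Matrix

theorem pencil_diag_s15 (n : ℕ) (D : Fin n → ℝ) (A : Matrix (Fin n) (Fin n) ℝ) :
    (pencil (diagonal D) A).natDegree ≤ (diagonal D).rank := by
  classical
  rw [Matrix.rank_diagonal, pencil, Matrix.det_apply]
  refine natDegree_sum_le_of_forall_le _ _ fun σ _ => ?_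
  refine (natDegree_smul_le _ _).trans ?_
  refine (natDegree_prod_le _ _).trans ?_
  rw [Fintype.card_subtype, Finset.card_filter]
  refine Finset.sum_le_sum fun i _ => ?_
  split_ifs with h
  · simp only [of_apply]
    compute_degree
  · push Not at h
    by_cases hs : σ i = i <;> simp [diagonal_apply, hs, h]

theorem pencil_mul (n : ℕ) (U V E A : Matrix (Fin n) (Fin n) ℝ) :
    pencil (U * E * V) (U * A * V) = C U.det * pencil E A * C V.det := by
  have h : ∀ E A : Matrix (Fin n) (Fin n) ℝ,
      pencil E A = ((X : ℝ[X]) • E.map C - A.map C).det := by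
    intro E A
    rw [pencil]
    congr 1
  rw [h, h, RingHom.map_det, RingHom.map_det, ← det_mul, ← det_mul]
  congr 1
  simp only [RingHom.mapMatrix_apply, Matrix.map_mul, Matrix.mul_sub, Matrix.sub_mul,
    Matrix.mul_smul, Matrix.smul_mul]

/-- The pencil polynomial `det(X·E − A)` has degree at most `rank E`;
in particular its `natDegree` is at most `rank E`. -/
theorem stmt15 (n : ℕ) (E A : Matrix (Fin n) (Fin n) ℝ) :
    (pencil E A).degree ≤ (E.rank : WithBot ℕ) ∧ (pencil E A).natDegree ≤ E.rank := by
  have key : (pencil E A).natDegree ≤ E.rank := by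
    obtain ⟨L, L', D, h⟩ :=
      Matrix.Pivot.exists_list_transvec_mul_mul_list_transvec_eq_diagonal E
    have hU := TransvectionStruct.det_toMatrix_prod L
    have hV := TransvectionStruct.det_toMatrix_prod L'
    generalize (L.map TransvectionStruct.toMatrix).prod = U at *
    generalize (L'.map TransvectionStruct.toMatrix).prod = V at *
    have h1 := pencil_mul n U V E A
    rw [hU, hV, h] at h1
    simp only [map_one, one_mul, mul_one] at h1
    rw [← h1]
    refine (pencil_diag_s15 n D _).trans ?_
    rw [← h]
    exact (rank_mul_le_left _ _).trans (rank_mul_le_right _ _)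
  exact ⟨degree_le_of_natDegree_le key, key⟩
end

section
/- Let E₁, A₁ be n₁×n₁ real matrices, E₂, A₂ be n₂×n₂ real matrices, and A₁₂ an n₁×n₂ real matrix. Set E = [[E₁, 0],[0, E₂]] (block diagonal) and A = [[A₁, A₁₂],[0, A₂]] (block upper triangular). Then the pair (E, A) is regular and impulse-free if and only if both pairs (E₁, A₁) and (E₂, A₂) are regular and impulse-free. -/
open Polynomial Matrix

/-- The pair `(E, A)` is regular and impulse-free. -/
def RegularImpulseFreePair {n : Type*} [Fintype n] [DecidableEq n]
    (E A : Matrix n n ℝ) : Prop :=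
  pencil E A ≠ 0 ∧ (pencil E A).natDegree = E.rank

theorem pencil_eq_aux {n : Type*} [Fintype n] [DecidableEq n] (E A : Matrix n n ℝ) :
    pencil E A = ((X : ℝ[X]) • E.map C - A.map C).det := by
  unfold pencil
  congr 1

theorem pencil_mul_aux {n : Type*} [Fintype n] [DecidableEq n] (E A V U : Matrix n n ℝ) :
    pencil (V * E * U) (V * A * U) = C V.det * pencil E A * C U.det := by
  rw [pencil_eq_aux, pencil_eq_aux]
  have h : (X : ℝ[X]) • (V * E * U).map C - (V * A * U).map C
      = V.map C * ((X : ℝ[X]) • E.map C - A.map C) * U.map C := by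
    simp only [Matrix.map_mul, Matrix.mul_sub, Matrix.sub_mul, Matrix.mul_smul, Matrix.smul_mul]
  rw [h, det_mul, det_mul, RingHom.map_det, RingHom.map_det]
  rfl

theorem diag_bound_aux {n : Type*} [Fintype n] [DecidableEq n] (w : n → ℝ) (A : Matrix n n ℝ) :
    (pencil (diagonal w) A).natDegree ≤ (diagonal w).rank := by
  classical
  rw [rank_diagonal, Fintype.card_subtype, Finset.card_filter]
  unfold pencil
  rw [det_apply]
  refine natDegree_sum_le_of_forall_le _ _ fun g _ => ?_
  refine (natDegree_smul_le _ _).trans ?_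
  rw [← Equiv.sum_comp g]
  refine (natDegree_prod_le _ _).trans (Finset.sum_le_sum fun i _ => ?_)
  simp only [of_apply, diagonal_apply]
  by_cases hw : w (g i) = 0
  · simp [hw]
  · rw [if_pos hw]
    compute_degree

theorem natDegree_le_rank_aux {n : Type*} [Fintype n] [DecidableEq n] (E A : Matrix n n ℝ) :
    (pencil E A).natDegree ≤ E.rank := by
  obtain ⟨V, U, e, hV, hU, h⟩ := exists_rank_normal_form E
  rw [isUnit_iff_isUnit_det] at hV hU
  have h2 := pencil_mul_aux E A V U
  rw [← diagonal_one, ← diagonal_zero, fromBlocks_diagonal, submatrix_diagonal_equiv] at h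
  have h3 := diag_bound_aux _ (V * A * U) |>.trans_eq' (by rw [← h])
  rw [← h, h2, natDegree_mul_C hU.ne_zero, natDegree_C_mul hV.ne_zero,
    rank_mul_eq_left_of_isUnit_det _ _ hU, rank_mul_eq_right_of_isUnit_det _ _ hV] at h3
  exact h3

theorem rank_blocks_aux {m n : Type*} [Fintype m] [DecidableEq m] [Fintype n] [DecidableEq n]
    (E : Matrix m m ℝ) (F : Matrix n n ℝ) :
    (fromBlocks E 0 0 F).rank = E.rank + F.rank := by
  classical
  obtain ⟨V, U, e, hV, hU, h⟩ := exists_rank_normal_form E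
  obtain ⟨V', U', e', hV', hU', h'⟩ := exists_rank_normal_form F
  rw [isUnit_iff_isUnit_det] at hV hU hV' hU'
  rw [← diagonal_one, ← diagonal_zero, fromBlocks_diagonal, submatrix_diagonal_equiv] at h h'
  have a : IsUnit (fromBlocks V 0 0 V').det := by
    rw [det_fromBlocks_zero₂₁]; exact hV.mul hV'
  have b : IsUnit (fromBlocks U 0 0 U').det := by
    rw [det_fromBlocks_zero₂₁]; exact hU.mul hU'
  rw [← rank_mul_eq_right_of_isUnit_det _ (fromBlocks E 0 0 F) a,
    ← rank_mul_eq_left_of_isUnit_det _ (fromBlocks V 0 0 V' * _) b,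
    ← rank_mul_eq_right_of_isUnit_det _ E hV, ← rank_mul_eq_left_of_isUnit_det _ (V * E) hU,
    ← rank_mul_eq_right_of_isUnit_det _ F hV', ← rank_mul_eq_left_of_isUnit_det _ (V' * F) hU']
  simp only [fromBlocks_multiply, Matrix.mul_zero, Matrix.zero_mul, add_zero, zero_add]
  rw [h, h', fromBlocks_diagonal, rank_diagonal, rank_diagonal, rank_diagonal]
  simp only [Fintype.card_subtype, Finset.card_filter, Fintype.sum_sum_type, Sum.elim_inl,
    Sum.elim_inr]
  congr!

theorem pencil_blocks_aux {m n : Type*} [Fintype m] [DecidableEq m] [Fintype n] [DecidableEq n]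
    (E A : Matrix m m ℝ) (F B : Matrix n n ℝ) (G : Matrix m n ℝ) :
    pencil (fromBlocks E 0 0 F) (fromBlocks A G 0 B) = pencil E A * pencil F B := by
  unfold pencil
  rw [← det_fromBlocks_zero₂₁ _ (of fun i j => - C (G i j))]
  congr 1
  ext i j : 2
  rcases i with i | i <;> rcases j with j | j <;> simp

/-- For `E = [[E₁, 0],[0, E₂]]` block diagonal and `A = [[A₁, A₁₂],[0, A₂]]` block
upper triangular, `(E, A)` is regular and impulse-free iff both `(E₁, A₁)` and
`(E₂, A₂)` are regular and impulse-free. -/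
theorem stmt16 (n₁ n₂ : ℕ)
    (E₁ A₁ : Matrix (Fin n₁) (Fin n₁) ℝ) (E₂ A₂ : Matrix (Fin n₂) (Fin n₂) ℝ)
    (A₁₂ : Matrix (Fin n₁) (Fin n₂) ℝ) :
    RegularImpulseFreePair (Matrix.fromBlocks E₁ 0 0 E₂) (Matrix.fromBlocks A₁ A₁₂ 0 A₂) ↔
      RegularImpulseFreePair E₁ A₁ ∧ RegularImpulseFreePair E₂ A₂ := by
  unfold RegularImpulseFreePair
  rw [pencil_blocks_aux, rank_blocks_aux, mul_ne_zero_iff]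
  have h1 := natDegree_le_rank_aux E₁ A₁
  have h2 := natDegree_le_rank_aux E₂ A₂
  constructor
  · rintro ⟨⟨ha, hb⟩, h⟩
    rw [natDegree_mul ha hb] at h
    exact ⟨⟨ha, by omega⟩, ⟨hb, by omega⟩⟩
  · rintro ⟨⟨ha, h⟩, ⟨hb, h'⟩⟩
    refine ⟨⟨ha, hb⟩, ?_⟩
    rw [natDegree_mul ha hb, h, h']
end

section
/- Let E, A, R be h×h real matrices with R invertible, C an l×h real matrix, and λ_min > 0, and set K_z = −(1/(2λ_min))·R⁻ᵀ·Cᵀ. Assume EᵀR = RᵀE ⪰ 0 and RᵀA + AᵀR ⪯ 0. Let N ≥ 2 and let Δ : ℝ → ℝ^{(N−1)×(N−1)} take symmetric positive semidefinite values, and let x̂ : ℝ → ℝ^{(N−1)h} be differentiable with (I_{N−1} ⊗ E)·x̂′(t) = (I_{N−1} ⊗ A + Δ(t) ⊗ K_z·C)·x̂(t) for all t. Then V(t) := x̂(t)ᵀ·(I_{N−1} ⊗ EᵀR)·x̂(t) satisfies V′(t) = x̂(t)ᵀ·(I_{N−1} ⊗ (RᵀA + AᵀR) − λ_min⁻¹·Δ(t)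 ⊗ CᵀC)·x̂(t) ≤ −λ_min⁻¹·x̂(t)ᵀ·(Δ(t) ⊗ CᵀC)·x̂(t) ≤ 0 for all t; in particular V is nonincreasing. -/
open Matrix Kronecker

theorem quad_symm_aux {n : Type*} [Fintype n] (M : Matrix n n ℝ) (x y : n → ℝ) :
    x ⬝ᵥ (M *ᵥ y) = y ⬝ᵥ (Mᵀ *ᵥ x) := by
  rw [Matrix.dotProduct_mulVec, ← Matrix.mulVec_transpose, dotProduct_comm]

theorem quad_deriv_aux {n : Type*} [Fintype n] (M : Matrix n n ℝ) (hM : Mᵀ = M)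
    (x : ℝ → n → ℝ) (hx : Differentiable ℝ x) (t : ℝ) :
    HasDerivAt (fun t => x t ⬝ᵥ (M *ᵥ x t)) (2 * (x t ⬝ᵥ (M *ᵥ deriv x t))) t := by
  have hc : ∀ i, HasDerivAt (fun s => x s i) (deriv x t i) t :=
    fun i => (hasDerivAt_pi.1 (hx t).hasDerivAt) i
  have key : HasDerivAt (fun t => x t ⬝ᵥ (M *ᵥ x t))
      (deriv x t ⬝ᵥ (M *ᵥ x t) + x t ⬝ᵥ (M *ᵥ deriv x t)) t := by
    simp only [dotProduct, mulVec]
    rw [← Finset.sum_add_distrib]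
    refine HasDerivAt.fun_sum fun i _ => ?_
    refine (hc i).mul (HasDerivAt.fun_sum fun j _ => ?_)
    exact (hc j).const_mul (M i j)
  convert key using 1
  rw [quad_symm_aux M (deriv x t), hM]
  ring

/-- Lyapunov monotonicity estimate (equations (28)–(29)) in the proof of the paper's
Theorem 3: along the jointly-connected-case dynamics
`(I ⊗ E) x̂′ = (I ⊗ A + Δ(t) ⊗ K_z C) x̂` with `K_z = −(1/(2λ_min)) R⁻ᵀ Cᵀ`,
`EᵀR = RᵀE ⪰ 0`, `RᵀA + AᵀR ⪯ 0`, and `Δ(t) ⪰ 0`, the function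
`V(t) = x̂ᵀ(I ⊗ EᵀR)x̂` satisfies
`V′ = x̂ᵀ(I ⊗ (RᵀA + AᵀR) − λ_min⁻¹ Δ(t) ⊗ CᵀC)x̂ ≤ −λ_min⁻¹ x̂ᵀ(Δ(t) ⊗ CᵀC)x̂ ≤ 0`,
so `V` is nonincreasing. -/
theorem stmt19 (N h l : ℕ) (hN : 2 ≤ N)
    (E A R : Matrix (Fin h) (Fin h) ℝ) (hR : IsUnit R.det)
    (C : Matrix (Fin l) (Fin h) ℝ)
    (lmin : ℝ) (hlmin : 0 < lmin)
    (Kz : Matrix (Fin h) (Fin l) ℝ) (hKz : Kz = -(1 / (2 * lmin)) • ((R⁻¹)ᵀ * Cᵀ))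
    (h1 : Eᵀ * R = Rᵀ * E) (h2 : (Eᵀ * R).PosSemidef)
    (h3 : (-(Rᵀ * A + Aᵀ * R)).PosSemidef)
    (Δ : ℝ → Matrix (Fin (N - 1)) (Fin (N - 1)) ℝ) (hΔ : ∀ t, (Δ t).PosSemidef)
    (xhat : ℝ → Fin (N - 1) × Fin h → ℝ) (hx : Differentiable ℝ xhat)
    (heq : ∀ t, ((1 : Matrix (Fin (N - 1)) (Fin (N - 1)) ℝ) ⊗ₖ E).mulVec (deriv xhat t)
      = (((1 : Matrix (Fin (N - 1)) (Fin (N - 1)) ℝ) ⊗ₖ A)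
          + (Δ t ⊗ₖ (Kz * C))).mulVec (xhat t))
    (V : ℝ → ℝ)
    (hV : V = fun t => xhat t ⬝ᵥ
      (((1 : Matrix (Fin (N - 1)) (Fin (N - 1)) ℝ) ⊗ₖ (Eᵀ * R)).mulVec (xhat t))) :
    (∀ t, deriv V t
        = xhat t ⬝ᵥ
          ((((1 : Matrix (Fin (N - 1)) (Fin (N - 1)) ℝ) ⊗ₖ (Rᵀ * A + Aᵀ * R))
            - lmin⁻¹ • (Δ t ⊗ₖ (Cᵀ * C))).mulVec (xhat t)) ∧
      deriv V t ≤ -lmin⁻¹ * (xhat t ⬝ᵥ ((Δ t ⊗ₖ (Cᵀ * C)).mulVec (xhat t))) ∧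
      -lmin⁻¹ * (xhat t ⬝ᵥ ((Δ t ⊗ₖ (Cᵀ * C)).mulVec (xhat t))) ≤ 0) ∧
    Antitone V := by
  have hRR : Rᵀ * (R⁻¹)ᵀ = 1 := by
    rw [← Matrix.transpose_mul, Matrix.nonsing_inv_mul _ hR, Matrix.transpose_one]
  have hK : Rᵀ * (Kz * C) = (-(1 / (2 * lmin))) • (Cᵀ * C) := by
    rw [hKz, Matrix.smul_mul, Matrix.mul_smul, ← Matrix.mul_assoc, ← Matrix.mul_assoc, hRR,
      Matrix.one_mul]
  have hsym : ((1 : Matrix (Fin (N - 1)) (Fin (N - 1)) ℝ) ⊗ₖ (Eᵀ * R))ᵀ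
      = (1 : Matrix (Fin (N - 1)) (Fin (N - 1)) ℝ) ⊗ₖ (Eᵀ * R) := by
    rw [← Matrix.kroneckerMap_transpose, Matrix.transpose_one, Matrix.transpose_mul,
      Matrix.transpose_transpose, ← h1]
  have hD : ∀ t, HasDerivAt V (xhat t ⬝ᵥ
          ((((1 : Matrix (Fin (N - 1)) (Fin (N - 1)) ℝ) ⊗ₖ (Rᵀ * A + Aᵀ * R))
            - lmin⁻¹ • (Δ t ⊗ₖ (Cᵀ * C))).mulVec (xhat t))) t := by
    intro t
    have h := quad_deriv_aux _ hsym xhat hx t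
    rw [← hV] at h
    convert h using 1
    have e : ((1 : Matrix (Fin (N - 1)) (Fin (N - 1)) ℝ) ⊗ₖ (Eᵀ * R)) *ᵥ deriv xhat t
        = ((1 : Matrix (Fin (N - 1)) (Fin (N - 1)) ℝ) ⊗ₖ (Rᵀ * A)) *ᵥ xhat t
          + (-(1 / (2 * lmin))) • ((Δ t ⊗ₖ (Cᵀ * C)) *ᵥ xhat t) := by
      have e1 : ((1 : Matrix (Fin (N - 1)) (Fin (N - 1)) ℝ) ⊗ₖ (Eᵀ * R))
          = ((1 : Matrix (Fin (N - 1)) (Fin (N - 1)) ℝ) ⊗ₖ Rᵀ) * (1 ⊗ₖ E) := by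
        rw [← Matrix.mul_kronecker_mul, Matrix.one_mul, h1]
      rw [e1, ← Matrix.mulVec_mulVec, heq t, Matrix.mulVec_mulVec, Matrix.mul_add,
        ← Matrix.mul_kronecker_mul, ← Matrix.mul_kronecker_mul, Matrix.one_mul, Matrix.one_mul,
        hK, Matrix.kronecker_smul, Matrix.add_mulVec, Matrix.smul_mulVec]
    have e2 : xhat t ⬝ᵥ (((1 : Matrix (Fin (N - 1)) (Fin (N - 1)) ℝ) ⊗ₖ (Aᵀ * R)) *ᵥ xhat t)
        = xhat t ⬝ᵥ (((1 : Matrix (Fin (N - 1)) (Fin (N - 1)) ℝ) ⊗ₖ (Rᵀ * A)) *ᵥ xhat t) := by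
      rw [quad_symm_aux, ← Matrix.kroneckerMap_transpose, Matrix.transpose_one,
        Matrix.transpose_mul, Matrix.transpose_transpose]
    rw [e, Matrix.kronecker_add, Matrix.sub_mulVec, Matrix.add_mulVec, Matrix.smul_mulVec,
      dotProduct_sub, dotProduct_add, dotProduct_add, dotProduct_smul, dotProduct_smul, e2,
      smul_eq_mul, smul_eq_mul]
    field_simp
    ring
  have hP : ∀ t, 0 ≤ xhat t ⬝ᵥ ((Δ t ⊗ₖ (Cᵀ * C)).mulVec (xhat t)) := by
    intro t
    have hC : (Cᵀ * C).PosSemidef := by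
      simpa using Matrix.posSemidef_conjTranspose_mul_self C
    simpa using ((hΔ t).kronecker hC).dotProduct_mulVec_nonneg (xhat t)
  have hQ : ∀ t, xhat t ⬝ᵥ (((1 : Matrix (Fin (N - 1)) (Fin (N - 1)) ℝ) ⊗ₖ
      (Rᵀ * A + Aᵀ * R)) *ᵥ xhat t) ≤ 0 := by
    intro t
    have h := ((Matrix.PosSemidef.one (n := Fin (N - 1)) (R := ℝ)).kronecker
      h3).dotProduct_mulVec_nonneg (xhat t)
    have e : ((1 : Matrix (Fin (N - 1)) (Fin (N - 1)) ℝ) ⊗ₖ (-(Rᵀ * A + Aᵀ * R)))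
        = -((1 : Matrix (Fin (N - 1)) (Fin (N - 1)) ℝ) ⊗ₖ (Rᵀ * A + Aᵀ * R)) := by
      rw [← neg_one_smul ℝ (Rᵀ * A + Aᵀ * R), Matrix.kronecker_smul, neg_one_smul]
    rw [e, Matrix.neg_mulVec, dotProduct_neg, star_trivial] at h
    linarith
  have hli : 0 < lmin⁻¹ := inv_pos.2 hlmin
  have hmain : ∀ t, deriv V t ≤ -lmin⁻¹ * (xhat t ⬝ᵥ ((Δ t ⊗ₖ (Cᵀ * C)).mulVec (xhat t))) := by
    intro t
    rw [(hD t).deriv, Matrix.sub_mulVec, Matrix.smul_mulVec, dotProduct_sub, dotProduct_smul,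
      smul_eq_mul]
    linarith [hQ t]
  have hneg : ∀ t, -lmin⁻¹ * (xhat t ⬝ᵥ ((Δ t ⊗ₖ (Cᵀ * C)).mulVec (xhat t))) ≤ 0 := by
    intro t
    nlinarith [mul_nonneg hli.le (hP t)]
  refine ⟨fun t => ⟨(hD t).deriv, hmain t, hneg t⟩, ?_⟩
  exact antitone_of_deriv_nonpos (fun t => (hD t).differentiableAt)
    (fun t => (hmain t).trans (hneg t))
end
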